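/- arXiv:2204.05014 — 3 statements merged into one kernel-verified Lean document; each statement's English description precedes it below -/
import Mathlib

section
/- For integers a_0, …, a_15, the following three conditions are equivalent: (1) the circulant determinant D(a_0, …, a_15) = ∏_{d | 16} N_d is congruent to 64 modulo 128 (i.e., equals 64 times an odd integer); (2) N_1 and N_2 are each twice an odd integer, and N_4 · N_8 · N_16 is 16 times an odd integer; (3) N_1, N_2 and N_4 are each twice an odd integer, and N_8 · N_16 is 8 times an odd integer. -/
open Complex Finset

noncomputable def zeta16 : ℂ := Complex.exp (2 * Real.pi * Complex.I / 16)

noncomputable def fpoly (a : Fin 16 → ℤ) (x : ℂ) : ℂ := ∑ k : Fin 16, (a k : ℂ) * x ^ (k : ℕ)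

noncomputable def Nprod (a : Fin 16 → ℤ) (d : ℕ) : ℂ :=
  ∏ l ∈ Finset.filter (fun l => Nat.gcd l 16 = d) (Finset.range 16), fpoly a (zeta16 ^ l)

def circMatrix (a : Fin 16 → ℤ) : Matrix (Fin 16) (Fin 16) ℤ := fun i j => a (i - j)

def S16 : Set ℤ := { n | ∃ a : Fin 16 → ℤ, n = (circMatrix a).det }

def bcoef (a : Fin 16 → ℤ) (k : Fin 16) : ℤ := (a k + a (k + 8)) + (a (k + 4) + a (k + 12))
def ccoef (a : Fin 16 → ℤ) (k : Fin 16) : ℤ := (a k + a (k + 8)) - (a (k + 4) + a (k + 12))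
def ecoef (a : Fin 16 → ℤ) (k : Fin 16) : ℤ := a k - a (k + 8)

lemma zeta_prim : IsPrimitiveRoot zeta16 16 := by
  have := Complex.isPrimitiveRoot_exp 16 (by norm_num)
  simpa [zeta16] using this

lemma zeta_pow8 : zeta16 ^ 8 = -1 := by
  have h := zeta_prim
  have h1 : (zeta16 ^ 8 - 1) * (zeta16 ^ 8 + 1) = 0 := by
    have := h.pow_eq_one
    linear_combination this
  rcases mul_eq_zero.mp h1 with h2 | h2
  · exact absurd (sub_eq_zero.mp h2) (h.pow_ne_one_of_pos_of_lt (by norm_num) (by norm_num))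
  · exact eq_neg_of_add_eq_zero_left h2

/-- The circulant determinant is the product of the values at roots of unity. -/
lemma det_circ (a : Fin 16 → ℤ) :
    (((circMatrix a).det : ℤ) : ℂ) = ∏ l : Fin 16, fpoly a (zeta16 ^ (l : ℕ)) := by
  set V : Matrix (Fin 16) (Fin 16) ℂ := Matrix.vandermonde (fun l : Fin 16 => zeta16 ^ (l : ℕ))
    with hV
  set C : Matrix (Fin 16) (Fin 16) ℂ := (circMatrix a).map (Int.castRingHom ℂ) with hC
  have hdet : C.det = (((circMatrix a).det : ℤ) : ℂ) := by
    rw [hC]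
    exact (RingHom.map_det (Int.castRingHom ℂ) (circMatrix a)).symm
  have hVdet : V.det ≠ 0 := by
    rw [hV, Matrix.det_vandermonde_ne_zero_iff]
    intro i j hij
    exact Fin.ext (zeta_prim.pow_inj i.2 j.2 hij)
  have key : V * C = Matrix.diagonal (fun l : Fin 16 => fpoly a (zeta16 ^ (l : ℕ))) * V := by
    ext l j
    rw [Matrix.diagonal_mul, Matrix.mul_apply, ← Equiv.sum_comp (Equiv.addRight j), fpoly,
      Finset.sum_mul]
    refine Finset.sum_congr rfl fun k _ => ?_
    have hx : (zeta16 ^ (l : ℕ)) ^ 16 = 1 := by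
      rw [← pow_mul, mul_comm, pow_mul, zeta_prim.pow_eq_one, one_pow]
    simp only [hV, hC, Matrix.vandermonde_apply, Matrix.map_apply, circMatrix,
      Equiv.coe_addRight, add_sub_cancel_right, Fin.val_add]
    rw [← pow_eq_pow_mod _ hx, pow_add]
    simp only [eq_intCast]
    ring
  have h := congrArg Matrix.det key
  rw [Matrix.det_mul, Matrix.det_mul, Matrix.det_diagonal, mul_comm, hdet] at h
  exact mul_right_cancel₀ hVdet h

lemma Nprod1 (a : Fin 16 → ℤ) : Nprod a 1 =
    fpoly a (zeta16 ^ 1) * fpoly a (zeta16 ^ 3) * fpoly a (zeta16 ^ 5) * fpoly a (zeta16 ^ 7) *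
    fpoly a (zeta16 ^ 9) * fpoly a (zeta16 ^ 11) * fpoly a (zeta16 ^ 13) *
    fpoly a (zeta16 ^ 15) := by
  have : Finset.filter (fun l => Nat.gcd l 16 = 1) (Finset.range 16)
    = {1, 3, 5, 7, 9, 11, 13, 15} := by decide
  rw [Nprod, this]
  simp [Finset.prod_insert, mul_assoc]

lemma Nprod2 (a : Fin 16 → ℤ) : Nprod a 2 =
    fpoly a (zeta16 ^ 2) * fpoly a (zeta16 ^ 6) * fpoly a (zeta16 ^ 10) *
    fpoly a (zeta16 ^ 14) := by
  have : Finset.filter (fun l => Nat.gcd l 16 = 2) (Finset.range 16)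
    = {2, 6, 10, 14} := by decide
  rw [Nprod, this]
  simp [Finset.prod_insert, mul_assoc]

lemma Nprod4 (a : Fin 16 → ℤ) : Nprod a 4 =
    fpoly a (zeta16 ^ 4) * fpoly a (zeta16 ^ 12) := by
  have : Finset.filter (fun l => Nat.gcd l 16 = 4) (Finset.range 16) = {4, 12} := by decide
  rw [Nprod, this]
  simp [Finset.prod_insert]

lemma Nprod8 (a : Fin 16 → ℤ) : Nprod a 8 = fpoly a (zeta16 ^ 8) := by
  have : Finset.filter (fun l => Nat.gcd l 16 = 8) (Finset.range 16) = {8} := by decide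
  rw [Nprod, this]
  simp

lemma Nprod16 (a : Fin 16 → ℤ) : Nprod a 16 = fpoly a (zeta16 ^ 0) := by
  have : Finset.filter (fun l => Nat.gcd l 16 = 16) (Finset.range 16) = {0} := by decide
  rw [Nprod, this]
  simp

lemma det_eq_Nprod (a : Fin 16 → ℤ) : (((circMatrix a).det : ℤ) : ℂ) =
    Nprod a 1 * Nprod a 2 * Nprod a 4 * Nprod a 8 * Nprod a 16 := by
  rw [det_circ, Nprod1, Nprod2, Nprod4, Nprod8, Nprod16,
    Fin.prod_univ_eq_prod_range (fun l => fpoly a (zeta16 ^ l)) 16]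
  simp only [Finset.prod_range_succ, Finset.prod_range_zero]
  ring

lemma fpoly_expand (a : Fin 16 → ℤ) (x : ℂ) : fpoly a x =
    a 0 + a 1 * x + a 2 * x ^ 2 + a 3 * x ^ 3 + a 4 * x ^ 4 + a 5 * x ^ 5 + a 6 * x ^ 6
    + a 7 * x ^ 7 + a 8 * x ^ 8 + a 9 * x ^ 9 + a 10 * x ^ 10 + a 11 * x ^ 11 + a 12 * x ^ 12
    + a 13 * x ^ 13 + a 14 * x ^ 14 + a 15 * x ^ 15 := by
  simp [fpoly, Fin.sum_univ_succ]
  ring_nf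

/-- Parity of the coefficient sums over even and odd indices. -/
def evenSum (a : Fin 16 → ℤ) : ℤ := a 0 + a 2 + a 4 + a 6 + a 8 + a 10 + a 12 + a 14
def oddSum (a : Fin 16 → ℤ) : ℤ := a 1 + a 3 + a 5 + a 7 + a 9 + a 11 + a 13 + a 15

def F4 (d0 d1 d2 d3 : ℤ) (y : ℂ) : ℂ := d0 + d1 * y + d2 * y ^ 2 + d3 * y ^ 3

lemma norm2 (e0 e1 : ℤ) (w : ℂ) (hw : w ^ 2 = -1) :
    ((e0 : ℂ) + e1 * w) * (e0 + e1 * (-w)) = ((e0 ^ 2 + e1 ^ 2 : ℤ) : ℂ) := by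
  push_cast
  linear_combination (-(e1 : ℂ) ^ 2) * hw

lemma norm4_step (d0 d1 d2 d3 : ℤ) (y : ℂ) (hy : y ^ 4 = -1) :
    F4 d0 d1 d2 d3 y * F4 d0 d1 d2 d3 (-y) =
      ((d0 ^ 2 - d2 ^ 2 + 2 * d1 * d3 : ℤ) : ℂ) +
      ((2 * d0 * d2 - d1 ^ 2 + d3 ^ 2 : ℤ) : ℂ) * y ^ 2 := by
  unfold F4
  push_cast
  linear_combination ((d2 : ℂ) ^ 2 - 2 * d1 * d3 - d3 ^ 2 * y ^ 2) * hy

lemma norm4 (d0 d1 d2 d3 : ℤ) (y : ℂ) (hy : y ^ 4 = -1) :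
    F4 d0 d1 d2 d3 y * F4 d0 d1 d2 d3 (-y) * (F4 d0 d1 d2 d3 (y ^ 3) * F4 d0 d1 d2 d3 (-y ^ 3))
      = (((d0 ^ 2 - d2 ^ 2 + 2 * d1 * d3) ^ 2 + (2 * d0 * d2 - d1 ^ 2 + d3 ^ 2) ^ 2 : ℤ) : ℂ) := by
  have hy3 : (y ^ 3) ^ 4 = -1 := by
    calc (y ^ 3) ^ 4 = (y ^ 4) ^ 3 := by ring
      _ = -1 := by rw [hy]; norm_num
  rw [norm4_step _ _ _ _ _ hy, norm4_step _ _ _ _ _ hy3]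
  have : (y ^ 3) ^ 2 = -(y ^ 2) := by linear_combination y ^ 2 * hy
  rw [this]
  exact norm2 _ _ _ (by rw [← hy]; ring)

lemma parity4 (d0 d1 d2 d3 : ℤ) :
    (Even (d0 ^ 2 - d2 ^ 2 + 2 * d1 * d3) ↔ Even (d0 + d2)) ∧
    (Even (2 * d0 * d2 - d1 ^ 2 + d3 ^ 2) ↔ Even (d1 + d3)) := by
  constructor <;> simp [parity_simps]

lemma even_sq_sub (x : ℤ) : Even (x ^ 2 - x) := by
  simp [parity_simps]

lemma even_iff_of_sub {x y : ℤ} (h : Even (x - y)) : Even x ↔ Even y := Int.even_sub.mp h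

lemma parity8a (c0 c1 c2 c3 c4 c5 c6 c7 : ℤ) :
    Even (c0 ^ 2 - c4 ^ 2 - 2 * c2 * c6 + (2 * c1 * c7 + 2 * c3 * c5) +
      (c2 ^ 2 + 2 * c0 * c4 - c6 ^ 2 - (2 * c1 * c3 - 2 * c5 * c7))) ↔
    Even (c0 + c2 + c4 + c6) := by
  apply even_iff_of_sub
  obtain ⟨r0, h0⟩ := even_sq_sub c0
  obtain ⟨r2, h2⟩ := even_sq_sub c2
  obtain ⟨r4, h4⟩ := even_sq_sub c4
  obtain ⟨r6, h6⟩ := even_sq_sub c6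
  exact ⟨r0 + r2 - r4 - r6 - c4 - c6 - c2 * c6 + c1 * c7 + c3 * c5 + c0 * c4 - c1 * c3
    + c5 * c7, by linear_combination h0 + h2 - h4 - h6⟩

lemma parity8b (c0 c1 c2 c3 c4 c5 c6 c7 : ℤ) :
    Even (2 * c0 * c2 - 2 * c4 * c6 - (c1 ^ 2 - c5 ^ 2 - 2 * c3 * c7) +
      (2 * c0 * c6 + 2 * c2 * c4 - (c3 ^ 2 + 2 * c1 * c5 - c7 ^ 2))) ↔
    Even (c1 + c3 + c5 + c7) := by
  apply even_iff_of_sub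
  obtain ⟨r1, h1⟩ := even_sq_sub c1
  obtain ⟨r3, h3⟩ := even_sq_sub c3
  obtain ⟨r5, h5⟩ := even_sq_sub c5
  obtain ⟨r7, h7⟩ := even_sq_sub c7
  exact ⟨-r1 - r3 + r5 + r7 - c1 - c3 + c0 * c2 - c4 * c6 + c3 * c7 + c0 * c6 + c2 * c4
    - c1 * c5, by linear_combination -h1 - h3 + h5 + h7⟩

lemma fpoly_pair (a : Fin 16 → ℤ) : ∃ d0 d1 d2 d3 : ℤ,
    (Even (d0 + d2) ↔ Even (evenSum a)) ∧ (Even (d1 + d3) ↔ Even (oddSum a)) ∧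
    ∀ x : ℂ, x ^ 8 = -1 → fpoly a x * fpoly a (-x) = F4 d0 d1 d2 d3 (x ^ 2) := by
  obtain ⟨c0, h0⟩ : ∃ c, c = a 0 - a 8 := ⟨_, rfl⟩
  obtain ⟨c1, h1⟩ : ∃ c, c = a 1 - a 9 := ⟨_, rfl⟩
  obtain ⟨c2, h2⟩ : ∃ c, c = a 2 - a 10 := ⟨_, rfl⟩
  obtain ⟨c3, h3⟩ : ∃ c, c = a 3 - a 11 := ⟨_, rfl⟩
  obtain ⟨c4, h4⟩ : ∃ c, c = a 4 - a 12 := ⟨_, rfl⟩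
  obtain ⟨c5, h5⟩ : ∃ c, c = a 5 - a 13 := ⟨_, rfl⟩
  obtain ⟨c6, h6⟩ : ∃ c, c = a 6 - a 14 := ⟨_, rfl⟩
  obtain ⟨c7, h7⟩ : ∃ c, c = a 7 - a 15 := ⟨_, rfl⟩
  have hE : Even (evenSum a) ↔ Even (c0 + c2 + c4 + c6) := by
    simp only [evenSum, Int.even_iff]; omega
  have hO : Even (oddSum a) ↔ Even (c1 + c3 + c5 + c7) := by
    simp only [oddSum, Int.even_iff]; omega
  have hf : ∀ x : ℂ, x ^ 8 = -1 → fpoly a x = c0 + c1 * x + c2 * x ^ 2 + c3 * x ^ 3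
      + c4 * x ^ 4 + c5 * x ^ 5 + c6 * x ^ 6 + c7 * x ^ 7 := by
    intro x hx
    rw [fpoly_expand, h0, h1, h2, h3, h4, h5, h6, h7]
    push_cast
    linear_combination ((a 8 : ℂ) + a 9 * x + a 10 * x ^ 2 + a 11 * x ^ 3 + a 12 * x ^ 4
      + a 13 * x ^ 5 + a 14 * x ^ 6 + a 15 * x ^ 7) * hx
  refine ⟨c0 ^ 2 - c4 ^ 2 - 2 * c2 * c6 + (2 * c1 * c7 + 2 * c3 * c5),
    2 * c0 * c2 - 2 * c4 * c6 - (c1 ^ 2 - c5 ^ 2 - 2 * c3 * c7),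
    c2 ^ 2 + 2 * c0 * c4 - c6 ^ 2 - (2 * c1 * c3 - 2 * c5 * c7),
    2 * c0 * c6 + 2 * c2 * c4 - (c3 ^ 2 + 2 * c1 * c5 - c7 ^ 2), ?_, ?_, ?_⟩
  · rw [hE]; exact parity8a _ _ _ _ _ _ _ _
  · rw [hO]; exact parity8b _ _ _ _ _ _ _ _
  · intro x hx
    rw [hf x hx, hf (-x) (by rw [← hx]; ring)]
    unfold F4
    push_cast
    linear_combination ((c4 : ℂ) ^ 2 + 2 * c2 * c6 + 2 * c4 * c6 * x ^ 2 + c6 ^ 2 * x ^ 4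
      - x ^ 2 * (c5 ^ 2 + 2 * c3 * c7 + 2 * c5 * c7 * x ^ 2 + c7 ^ 2 * x ^ 4)
      - (2 * c1 * c7 + 2 * c3 * c5)) * hx

lemma N1_form (a : Fin 16 → ℤ) : ∃ A B : ℤ, (Even A ↔ Even (evenSum a)) ∧
    (Even B ↔ Even (oddSum a)) ∧ Nprod a 1 = ((A ^ 2 + B ^ 2 : ℤ) : ℂ) := by
  obtain ⟨d0, d1, d2, d3, hE, hO, H⟩ := fpoly_pair a
  refine ⟨_, _, (parity4 d0 d1 d2 d3).1.trans hE, (parity4 d0 d1 d2 d3).2.trans hO, ?_⟩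
  have z8 := zeta_pow8
  rw [← norm4 d0 d1 d2 d3 (zeta16 ^ 2) (by rw [← z8]; ring), Nprod1]
  have odd8 : ∀ m : ℕ, Odd m → (zeta16 ^ m) ^ 8 = -1 := by
    intro m hm
    rw [← pow_mul, mul_comm, pow_mul, z8, hm.neg_one_pow]
  have e1 := H _ (odd8 1 (by decide))
  have e3 := H _ (odd8 3 (by decide))
  have e5 := H _ (odd8 5 (by decide))
  have e7 := H _ (odd8 7 (by decide))
  have n1 : -zeta16 ^ 1 = zeta16 ^ 9 := by linear_combination -zeta16 * z8
  have n3 : -zeta16 ^ 3 = zeta16 ^ 11 := by linear_combination -zeta16 ^ 3 * z8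
  have n5 : -zeta16 ^ 5 = zeta16 ^ 13 := by linear_combination -zeta16 ^ 5 * z8
  have n7 : -zeta16 ^ 7 = zeta16 ^ 15 := by linear_combination -zeta16 ^ 7 * z8
  have s1 : (zeta16 ^ 1) ^ 2 = zeta16 ^ 2 := by ring
  have s3 : (zeta16 ^ 3) ^ 2 = (zeta16 ^ 2) ^ 3 := by ring
  have s5 : (zeta16 ^ 5) ^ 2 = -zeta16 ^ 2 := by linear_combination zeta16 ^ 2 * z8
  have s7 : (zeta16 ^ 7) ^ 2 = -(zeta16 ^ 2) ^ 3 := by linear_combination zeta16 ^ 6 * z8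
  rw [n1, s1] at e1
  rw [n3, s3] at e3
  rw [n5, s5] at e5
  rw [n7, s7] at e7
  rw [← e1, ← e3, ← e5, ← e7]
  ring

lemma N2_form (a : Fin 16 → ℤ) : ∃ A B : ℤ, (Even A ↔ Even (evenSum a)) ∧
    (Even B ↔ Even (oddSum a)) ∧ Nprod a 2 = ((A ^ 2 + B ^ 2 : ℤ) : ℂ) := by
  obtain ⟨d0, h0⟩ : ∃ d, d = a 0 - a 4 + a 8 - a 12 := ⟨_, rfl⟩
  obtain ⟨d1, h1⟩ : ∃ d, d = a 1 - a 5 + a 9 - a 13 := ⟨_, rfl⟩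
  obtain ⟨d2, h2⟩ : ∃ d, d = a 2 - a 6 + a 10 - a 14 := ⟨_, rfl⟩
  obtain ⟨d3, h3⟩ : ∃ d, d = a 3 - a 7 + a 11 - a 15 := ⟨_, rfl⟩
  have hE : Even (d0 + d2) ↔ Even (evenSum a) := by
    simp only [evenSum, Int.even_iff]; omega
  have hO : Even (d1 + d3) ↔ Even (oddSum a) := by
    simp only [oddSum, Int.even_iff]; omega
  refine ⟨_, _, (parity4 d0 d1 d2 d3).1.trans hE, (parity4 d0 d1 d2 d3).2.trans hO, ?_⟩
  have z8 := zeta_pow8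
  have hf : ∀ y : ℂ, y ^ 4 = -1 → fpoly a y = F4 d0 d1 d2 d3 y := by
    intro y hy
    rw [fpoly_expand, h0, h1, h2, h3]
    unfold F4
    push_cast
    linear_combination ((a 4 : ℂ) + a 5 * y + a 6 * y ^ 2 + a 7 * y ^ 3
      + (a 8 + a 9 * y + a 10 * y ^ 2 + a 11 * y ^ 3) * (y ^ 4 - 1)
      + (a 12 + a 13 * y + a 14 * y ^ 2 + a 15 * y ^ 3) * (y ^ 8 - y ^ 4 + 1)) * hy
  have hy : (zeta16 ^ 2) ^ 4 = -1 := by rw [← z8]; ring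
  have hy3 : ((zeta16 ^ 2) ^ 3) ^ 4 = -1 := by
    calc ((zeta16 ^ 2) ^ 3) ^ 4 = (zeta16 ^ 8) ^ 3 := by ring
      _ = -1 := by rw [z8]; norm_num
  have s6 : zeta16 ^ 6 = (zeta16 ^ 2) ^ 3 := by ring
  have s10 : zeta16 ^ 10 = -zeta16 ^ 2 := by linear_combination zeta16 ^ 2 * z8
  have s14 : zeta16 ^ 14 = -(zeta16 ^ 2) ^ 3 := by linear_combination zeta16 ^ 6 * z8
  rw [← norm4 d0 d1 d2 d3 (zeta16 ^ 2) hy, Nprod2, s6, s10, s14, hf _ hy, hf _ hy3,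
    hf (-zeta16 ^ 2) (by rw [← hy]; ring), hf (-(zeta16 ^ 2) ^ 3) (by rw [← hy3]; ring)]
  ring

lemma N4_form (a : Fin 16 → ℤ) : ∃ A B : ℤ, (Even A ↔ Even (evenSum a)) ∧
    (Even B ↔ Even (oddSum a)) ∧ Nprod a 4 = ((A ^ 2 + B ^ 2 : ℤ) : ℂ) := by
  obtain ⟨A, hA⟩ : ∃ d, d = a 0 - a 2 + a 4 - a 6 + a 8 - a 10 + a 12 - a 14 := ⟨_, rfl⟩
  obtain ⟨B, hB⟩ : ∃ d, d = a 1 - a 3 + a 5 - a 7 + a 9 - a 11 + a 13 - a 15 := ⟨_, rfl⟩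
  refine ⟨A, B, by simp only [evenSum, Int.even_iff]; omega,
    by simp only [oddSum, Int.even_iff]; omega, ?_⟩
  have z8 := zeta_pow8
  have hf : ∀ w : ℂ, w ^ 2 = -1 → fpoly a w = A + B * w := by
    intro w hw
    have p3 : w ^ 3 = -w := by linear_combination w * hw
    have p4 : w ^ 4 = 1 := by linear_combination (w ^ 2 - 1) * hw
    have p5 : w ^ 5 = w := by linear_combination w * p4
    have p6 : w ^ 6 = -1 := by linear_combination w ^ 2 * p4 + hw
    have p7 : w ^ 7 = -w := by linear_combination w ^ 3 * p4 + p3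
    have p8 : w ^ 8 = 1 := by linear_combination (w ^ 4 + 1) * p4
    have p9 : w ^ 9 = w := by linear_combination w * p8
    have p10 : w ^ 10 = -1 := by linear_combination w ^ 2 * p8 + hw
    have p11 : w ^ 11 = -w := by linear_combination w ^ 3 * p8 + p3
    have p12 : w ^ 12 = 1 := by linear_combination w ^ 4 * p8 + p4
    have p13 : w ^ 13 = w := by linear_combination w * p12
    have p14 : w ^ 14 = -1 := by linear_combination w ^ 2 * p12 + hw
    have p15 : w ^ 15 = -w := by linear_combination w ^ 3 * p12 + p3
    rw [fpoly_expand, hw, p3, p4, p5, p6, p7, p8, p9, p10, p11, p12, p13, p14, p15, hA, hB]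
    push_cast
    ring
  have hw : (zeta16 ^ 4) ^ 2 = -1 := by rw [← z8]; ring
  have s12 : zeta16 ^ 12 = -zeta16 ^ 4 := by linear_combination zeta16 ^ 4 * z8
  rw [← norm2 A B (zeta16 ^ 4) hw, Nprod4, s12, hf _ hw,
    hf (-zeta16 ^ 4) (by rw [← hw]; ring)]

lemma N8_form (a : Fin 16 → ℤ) : Nprod a 8 = ((evenSum a - oddSum a : ℤ) : ℂ) := by
  rw [Nprod8, zeta_pow8, fpoly_expand, evenSum, oddSum]
  push_cast
  ring

lemma N16_form (a : Fin 16 → ℤ) : Nprod a 16 = ((evenSum a + oddSum a : ℤ) : ℂ) := by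
  rw [Nprod16, pow_zero, fpoly_expand, evenSum, oddSum]
  push_cast
  ring

lemma sumsq_oo {A B : ℤ} (hA : Odd A) (hB : Odd B) : ∃ m, Odd m ∧ A ^ 2 + B ^ 2 = 2 * m := by
  obtain ⟨r, rfl⟩ := hA
  obtain ⟨s, rfl⟩ := hB
  exact ⟨2 * (r ^ 2 + r + s ^ 2 + s) + 1, ⟨_, rfl⟩, by ring⟩

lemma sumsq_ee {A B : ℤ} (hA : Even A) (hB : Even B) : (4 : ℤ) ∣ A ^ 2 + B ^ 2 := by
  obtain ⟨r, rfl⟩ := hA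
  obtain ⟨s, rfl⟩ := hB
  exact ⟨r ^ 2 + s ^ 2, by ring⟩

lemma sumsq_odd {A B : ℤ} (h : ¬ (Even A ↔ Even B)) : Odd (A ^ 2 + B ^ 2) := by
  rw [← Int.not_even_iff_odd]
  simpa [parity_simps] using h

lemma arith (S T N1 N2 N4 P : ℤ) (hP : P = (S - T) * (S + T))
    (h1 : ∃ A B : ℤ, (Even A ↔ Even S) ∧ (Even B ↔ Even T) ∧ N1 = A ^ 2 + B ^ 2)
    (h2 : ∃ A B : ℤ, (Even A ↔ Even S) ∧ (Even B ↔ Even T) ∧ N2 = A ^ 2 + B ^ 2)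
    (h4 : ∃ A B : ℤ, (Even A ↔ Even S) ∧ (Even B ↔ Even T) ∧ N4 = A ^ 2 + B ^ 2) :
    (Odd N1 ∧ Odd N2 ∧ Odd N4 ∧ Odd P) ∨ (4 ∣ N1 ∧ 4 ∣ N2 ∧ 4 ∣ N4 ∧ 4 ∣ P) ∨
    ((∃ m, Odd m ∧ N1 = 2 * m) ∧ (∃ m, Odd m ∧ N2 = 2 * m) ∧ (∃ m, Odd m ∧ N4 = 2 * m)) := by
  obtain ⟨A1, B1, a1, b1, rfl⟩ := h1
  obtain ⟨A2, B2, a2, b2, rfl⟩ := h2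
  obtain ⟨A4, B4, a4, b4, rfl⟩ := h4
  by_cases hS : Even S <;> by_cases hT : Even T
  · right; left
    refine ⟨sumsq_ee (a1.2 hS) (b1.2 hT), sumsq_ee (a2.2 hS) (b2.2 hT),
      sumsq_ee (a4.2 hS) (b4.2 hT), ?_⟩
    obtain ⟨r, rfl⟩ := hS
    obtain ⟨s, rfl⟩ := hT
    exact ⟨(r - s) * (r + s), by rw [hP]; ring⟩
  · left
    refine ⟨sumsq_odd (by tauto), sumsq_odd (by tauto), sumsq_odd (by tauto), ?_⟩
    rw [hP, ← Int.not_even_iff_odd]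
    simp [parity_simps, hS, hT]
  · left
    refine ⟨sumsq_odd (by tauto), sumsq_odd (by tauto), sumsq_odd (by tauto), ?_⟩
    rw [hP, ← Int.not_even_iff_odd]
    simp [parity_simps, hS, hT]
  · right; right
    simp only [← Int.not_even_iff_odd] at *
    refine ⟨?_, ?_, ?_⟩ <;> simp only [Int.not_even_iff_odd] at * 
    · exact sumsq_oo (by rw [← Int.not_even_iff_odd] at *; tauto)
        (by rw [← Int.not_even_iff_odd] at *; tauto)
    · exact sumsq_oo (by rw [← Int.not_even_iff_odd] at *; tauto)
        (by rw [← Int.not_even_iff_odd] at *; tauto)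
    · exact sumsq_oo (by rw [← Int.not_even_iff_odd] at *; tauto)
        (by rw [← Int.not_even_iff_odd] at *; tauto)

theorem det_64_odd_tfae (a : Fin 16 → ℤ)
    (N1 N2 N4 N8 N16 : ℤ)
    (h1 : (N1 : ℂ) = Nprod a 1) (h2 : (N2 : ℂ) = Nprod a 2) (h4 : (N4 : ℂ) = Nprod a 4)
    (h8 : (N8 : ℂ) = Nprod a 8) (h16 : (N16 : ℂ) = Nprod a 16) :
    List.TFAE
      [ ∃ m : ℤ, Odd m ∧ (circMatrix a).det = 64 * m,
        (∃ m : ℤ, Odd m ∧ N1 = 2 * m) ∧ (∃ m : ℤ, Odd m ∧ N2 = 2 * m) ∧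
          (∃ m : ℤ, Odd m ∧ N4 * N8 * N16 = 16 * m),
        (∃ m : ℤ, Odd m ∧ N1 = 2 * m) ∧ (∃ m : ℤ, Odd m ∧ N2 = 2 * m) ∧
          (∃ m : ℤ, Odd m ∧ N4 = 2 * m) ∧ (∃ m : ℤ, Odd m ∧ N8 * N16 = 8 * m) ] := by
  have hD : (circMatrix a).det = N1 * N2 * N4 * (N8 * N16) := by
    have h := det_eq_Nprod a
    rw [← h1, ← h2, ← h4, ← h8, ← h16] at h
    have h' : (circMatrix a).det = N1 * N2 * N4 * N8 * N16 := by exact_mod_cast h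
    rw [h']; ring
  have hP : N8 * N16 = (evenSum a - oddSum a) * (evenSum a + oddSum a) := by
    have e8 := h8.trans (N8_form a)
    have e16 := h16.trans (N16_form a)
    rw [Int.cast_injective e8, Int.cast_injective e16]
  have key := arith (evenSum a) (oddSum a) N1 N2 N4 (N8 * N16) hP
    (by obtain ⟨A, B, hA, hB, h⟩ := N1_form a
        exact ⟨A, B, hA, hB, Int.cast_injective (h1.trans h)⟩)
    (by obtain ⟨A, B, hA, hB, h⟩ := N2_form a
        exact ⟨A, B, hA, hB, Int.cast_injective (h2.trans h)⟩)
    (by obtain ⟨A, B, hA, hB, h⟩ := N4_form a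
        exact ⟨A, B, hA, hB, Int.cast_injective (h4.trans h)⟩)
  rw [hD, mul_assoc N4 N8 N16]
  generalize N8 * N16 = P at *
  tfae_have 3 → 2 := by
    rintro ⟨g1, g2, ⟨m, hm, e⟩, ⟨n, hn, e'⟩⟩
    exact ⟨g1, g2, m * n, hm.mul hn, by rw [e, e']; ring⟩
  tfae_have 2 → 1 := by
    rintro ⟨⟨m, hm, e⟩, ⟨n, hn, e'⟩, ⟨k, hk, e''⟩⟩
    refine ⟨m * n * k, (hm.mul hn).mul hk, ?_⟩
    rw [mul_assoc (N1 * N2), e'', e, e']; ring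
  tfae_have 1 → 3 := by
    rintro ⟨m, hm, e⟩
    rcases key with ⟨o1, o2, o4, oP⟩ | ⟨⟨r, rfl⟩, ⟨s, rfl⟩, ⟨t, rfl⟩, ⟨u, rfl⟩⟩ | ⟨g1, g2, g4⟩
    · exfalso
      have : Odd (64 * m) := e ▸ ((o1.mul o2).mul o4).mul oP
      rw [Int.odd_iff] at this
      omega
    · exfalso
      have : 64 * m = 256 * (r * s * t * u) := by rw [← e]; ring
      rw [Int.odd_iff] at hm
      omega
    · refine ⟨g1, g2, g4, ?_⟩
      obtain ⟨p, hp, rfl⟩ := g1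
      obtain ⟨q, hq, rfl⟩ := g2
      obtain ⟨r, hr, rfl⟩ := g4
      have ho : Odd (p * q * r) := (hp.mul hq).mul hr
      have e2 : p * q * r * P = 8 * m := by linarith
      have hc : IsCoprime (8 : ℤ) (p * q * r) := by
        have : IsCoprime ((2 : ℤ) ^ 3) (p * q * r) := (Int.isCoprime_two_left.mpr ho).pow_left
        simpa using this
      obtain ⟨n, rfl⟩ := hc.dvd_of_dvd_mul_left ⟨m, e2⟩
      refine ⟨n, ?_, rfl⟩
      have e3 : p * q * r * n = m := by linarith
      rw [← e3] at hm
      exact (Int.odd_mul.mp hm).2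
  tfae_finish
end

section
/- For integers a_0, …, a_15, the product N_4 · N_8 · N_16 is either odd or divisible by 16. -/
open Complex Finset

theorem z4_aux : zeta16 ^ 4 = Complex.I := by
  unfold zeta16
  rw [← Complex.exp_nat_mul]
  refine Eq.trans ?_ Complex.exp_pi_div_two_mul_I
  congr 1
  push_cast
  ring

theorem arith_aux (p q u v : ℤ) (hu : ∃ s, u = p - 2 * s) (hv : ∃ t, v = q - 2 * t) :
    Odd ((u ^ 2 + v ^ 2) * (p - q) * (p + q)) ∨
      (16 : ℤ) ∣ (u ^ 2 + v ^ 2) * (p - q) * (p + q) := by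
  obtain ⟨s, rfl⟩ := hu
  obtain ⟨t, rfl⟩ := hv
  rcases Int.even_or_odd' p with ⟨m, rfl | rfl⟩ <;> rcases Int.even_or_odd' q with ⟨n, rfl | rfl⟩
  · right
    exact ⟨((m - s) ^ 2 + (n - t) ^ 2) * (m - n) * (m + n), by ring⟩
  · left
    refine Odd.mul (Odd.mul ⟨2 * (m - s) ^ 2 + 2 * (n - t) ^ 2 + 2 * (n - t), by ring⟩
      ⟨m - n - 1, by ring⟩) ⟨m + n, by ring⟩
  · left
    refine Odd.mul (Odd.mul ⟨2 * (m - s) ^ 2 + 2 * (n - t) ^ 2 + 2 * (m - s), by ring⟩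
      ⟨m - n, by ring⟩) ⟨m + n, by ring⟩
  · right
    obtain ⟨k, hk⟩ : (2 : ℤ) ∣ (m - n) * (m + n + 1) := by
      rw [← even_iff_two_dvd]
      simp only [Int.even_mul, Int.even_sub, Int.even_add, Int.even_add_one]
      tauto
    refine ⟨(2 * (m - s) ^ 2 + 2 * (m - s) + 2 * (n - t) ^ 2 + 2 * (n - t) + 1) * k, ?_⟩
    linear_combination (8 * (2 * (m - s) ^ 2 + 2 * (m - s) + 2 * (n - t) ^ 2 + 2 * (n - t) + 1)) * hk

theorem N4_N8_N16_odd_or_sixteen_dvd (a : Fin 16 → ℤ)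
    (N4 N8 N16 : ℤ)
    (h4 : (N4 : ℂ) = Nprod a 4) (h8 : (N8 : ℂ) = Nprod a 8) (h16 : (N16 : ℂ) = Nprod a 16) :
    Odd (N4 * N8 * N16) ∨ (16 : ℤ) ∣ N4 * N8 * N16 := by
  have f16 : Finset.filter (fun l => Nat.gcd l 16 = 16) (Finset.range 16) = {0} := by decide
  have f8 : Finset.filter (fun l => Nat.gcd l 16 = 8) (Finset.range 16) = {8} := by decide
  have f4 : Finset.filter (fun l => Nat.gcd l 16 = 4) (Finset.range 16) = {4, 12} := by decide
  have z8 : zeta16 ^ 8 = -1 := by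
    rw [show 8 = 4 * 2 from rfl, pow_mul, z4_aux, Complex.I_sq]
  have z12 : zeta16 ^ 12 = -Complex.I := by
    rw [show 12 = 8 + 4 from rfl, pow_add, z8, z4_aux]; ring
  have key : ∀ x : ℂ, x ^ 4 = 1 → fpoly a x =
      ((a 0 + a 4 + a 8 + a 12 : ℤ) : ℂ) + ((a 1 + a 5 + a 9 + a 13 : ℤ) : ℂ) * x
      + ((a 2 + a 6 + a 10 + a 14 : ℤ) : ℂ) * x ^ 2
      + ((a 3 + a 7 + a 11 + a 15 : ℤ) : ℂ) * x ^ 3 := by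
    intro x hx
    have hp : ∀ j i : ℕ, x ^ (4 * j + i) = x ^ i := by
      intro j i
      rw [pow_add, pow_mul, hx, one_pow, one_mul]
    have e4 := hp 1 0
    have e5 := hp 1 1
    have e6 := hp 1 2
    have e7 := hp 1 3
    have e8 := hp 2 0
    have e9 := hp 2 1
    have e10 := hp 2 2
    have e11 := hp 2 3
    have e12 := hp 3 0
    have e13 := hp 3 1
    have e14 := hp 3 2
    have e15 := hp 3 3
    norm_num at e4 e5 e6 e7 e8 e9 e10 e11 e12 e13 e14 e15
    unfold fpoly
    simp only [Fin.sum_univ_succ, Fin.sum_univ_zero]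
    simp [Fin.succ] 
    simp only [e4, e5, e6, e7, e8, e9, e10, e11, e12, e13, e14, e15]
    ring_nf
    try rfl
  generalize a 0 + a 4 + a 8 + a 12 = s0 at key
  generalize a 1 + a 5 + a 9 + a 13 = s1 at key
  generalize a 2 + a 6 + a 10 + a 14 = s2 at key
  generalize a 3 + a 7 + a 11 + a 15 = s3 at key
  have g16 : N16 = (s0 + s2) + (s1 + s3) := by
    rw [Nprod, f16, Finset.prod_singleton, pow_zero, key 1 (by norm_num)] at h16
    have : (N16 : ℂ) = (((s0 + s2) + (s1 + s3) : ℤ) : ℂ) := by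
      rw [h16]; push_cast; ring
    exact_mod_cast this
  have g8 : N8 = (s0 + s2) - (s1 + s3) := by
    rw [Nprod, f8, Finset.prod_singleton, z8, key (-1) (by norm_num)] at h8
    have : (N8 : ℂ) = (((s0 + s2) - (s1 + s3) : ℤ) : ℂ) := by
      rw [h8]; push_cast; ring
    exact_mod_cast this
  have g4 : N4 = (s0 - s2) ^ 2 + (s1 - s3) ^ 2 := by
    have hI : Complex.I ^ 4 = 1 := Complex.I_pow_four
    rw [Nprod, f4, Finset.prod_pair (by norm_num), z4_aux, z12, key _ hI,
      key (-Complex.I) (by rw [Even.neg_pow (by decide), hI])] at h4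
    have : (N4 : ℂ) = (((s0 - s2) ^ 2 + (s1 - s3) ^ 2 : ℤ) : ℂ) := by
      rw [h4]
      have h2 := Complex.I_sq
      have h3 : Complex.I ^ 3 = -Complex.I := Complex.I_pow_three
      have e1 : (-Complex.I) ^ 2 = -1 := by rw [neg_sq, h2]
      have e2 : (-Complex.I) ^ 3 = Complex.I := by rw [Odd.neg_pow (by decide), h3, neg_neg]
      rw [e1, e2, h2, h3]
      push_cast
      linear_combination (-((s1 : ℂ) - s3) ^ 2) * h2
    exact_mod_cast this
  subst g16 g8 g4
  exact arith_aux (s0 + s2) (s1 + s3) _ _ ⟨s2, by ring⟩ ⟨s3, by ring⟩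
end

section
/- For integers a_0, …, a_15, the integer N_2 is twice an odd integer if and only if N_4 is twice an odd integer. -/
open Complex Finset

lemma fpoly_of_sq (a : Fin 16 → ℤ) (x : ℂ) (hx : x ^ 2 = -1) :
    fpoly a x = (((a 0 + a 4 + a 8 + a 12 - a 2 - a 6 - a 10 - a 14 : ℤ) : ℂ)
      + ((a 1 + a 5 + a 9 + a 13 - a 3 - a 7 - a 11 - a 15 : ℤ) : ℂ) * x) := by
  have h : ∀ n, x ^ (n + 2) = - x ^ n := fun n => by rw [pow_add, hx]; ring
  have e (n : ℕ) (m : ℕ) (hm : n = m + 2) : x ^ n = - x ^ m := by rw [hm, h]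
  have e3 := e 3 1 rfl
  have e4 := e 4 2 rfl
  have e5 := e 5 3 rfl
  have e6 := e 6 4 rfl
  have e7 := e 7 5 rfl
  have e8 := e 8 6 rfl
  have e9 := e 9 7 rfl
  have e10 := e 10 8 rfl
  have e11 := e 11 9 rfl
  have e12 := e 12 10 rfl
  have e13 := e 13 11 rfl
  have e14 := e 14 12 rfl
  have e15 := e 15 13 rfl
  simp only [fpoly, Fin.sum_univ_succ]
  simp
  simp only [e15, e14, e13, e12, e11, e10, e9, e8, e7, e6, e5, e4, e3, hx]
  ring

lemma fpoly_of_four (a : Fin 16 → ℤ) (x : ℂ) (hx : x ^ 4 = -1) :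
    fpoly a x = (((a 0 + a 8 - a 4 - a 12 : ℤ) : ℂ) + ((a 1 + a 9 - a 5 - a 13 : ℤ) : ℂ) * x
      + ((a 2 + a 10 - a 6 - a 14 : ℤ) : ℂ) * x ^ 2
      + ((a 3 + a 11 - a 7 - a 15 : ℤ) : ℂ) * x ^ 3) := by
  have h : ∀ n, x ^ (n + 4) = - x ^ n := fun n => by rw [pow_add, hx]; ring
  have e (n : ℕ) (m : ℕ) (hm : n = m + 4) : x ^ n = - x ^ m := by rw [hm, h]
  have e5 := e 5 1 rfl
  have e6 := e 6 2 rfl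
  have e7 := e 7 3 rfl
  have e8 := e 8 4 rfl
  have e9 := e 9 5 rfl
  have e10 := e 10 6 rfl
  have e11 := e 11 7 rfl
  have e12 := e 12 8 rfl
  have e13 := e 13 9 rfl
  have e14 := e 14 10 rfl
  have e15 := e 15 11 rfl
  simp only [fpoly, Fin.sum_univ_succ]
  simp
  simp only [e15, e14, e13, e12, e11, e10, e9, e8, e7, e6, e5, hx]
  ring

lemma fpoly_pair_s9 (a : Fin 16 → ℤ) (x J : ℂ) (hx : x ^ 2 = J) (hJ : J ^ 2 = -1)
    (p q r s : ℤ) (hp : p = a 0 + a 8 - a 4 - a 12) (hq : q = a 1 + a 9 - a 5 - a 13)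
    (hr : r = a 2 + a 10 - a 6 - a 14) (hs : s = a 3 + a 11 - a 7 - a 15) :
    fpoly a x * fpoly a (-x) =
      ((p ^ 2 - r ^ 2 + 2 * q * s : ℤ) : ℂ) + J * ((2 * p * r - q ^ 2 + s ^ 2 : ℤ) : ℂ) := by
  have h4 : x ^ 4 = -1 := by rw [← hJ, ← hx]; ring
  rw [fpoly_of_four a x h4, fpoly_of_four a (-x) (by rw [← h4]; ring), ← hp, ← hq, ← hr, ← hs]
  push_cast
  subst hx
  linear_combination ((r : ℂ) ^ 2 - 2 * q * s - s ^ 2 * x ^ 2) * h4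

lemma zeta16_pow_four : zeta16 ^ 4 = I := by
  rw [zeta16, ← Complex.exp_nat_mul]
  refine Eq.trans ?_ Complex.exp_pi_div_two_mul_I
  congr 1
  push_cast
  ring

lemma twice_odd_sq (u v : ℤ) :
    (∃ m : ℤ, Odd m ∧ u ^ 2 + v ^ 2 = 2 * m) ↔ (Odd u ∧ Odd v) := by
  rcases Int.even_or_odd' u with ⟨k, rfl | rfl⟩ <;> rcases Int.even_or_odd' v with ⟨l, rfl | rfl⟩
  · constructor
    · rintro ⟨m, ⟨t, rfl⟩, h⟩
      ring_nf at h
      omega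
    · rintro ⟨⟨t, h⟩, _⟩
      omega
  · constructor
    · rintro ⟨m, ⟨t, rfl⟩, h⟩
      ring_nf at h
      omega
    · rintro ⟨⟨t, h⟩, _⟩
      omega
  · constructor
    · rintro ⟨m, ⟨t, rfl⟩, h⟩
      ring_nf at h
      omega
    · rintro ⟨_, ⟨t, h⟩⟩
      omega
  · refine ⟨fun _ => ⟨⟨k, rfl⟩, ⟨l, rfl⟩⟩, fun _ => ?_⟩
    exact ⟨2 * (k ^ 2 + k + l ^ 2 + l) + 1, ⟨_, rfl⟩, by ring⟩

theorem N2_twice_odd_iff_N4_twice_odd (a : Fin 16 → ℤ)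
    (N2 N4 : ℤ) (h2 : (N2 : ℂ) = Nprod a 2) (h4 : (N4 : ℂ) = Nprod a 4) :
    (∃ m : ℤ, Odd m ∧ N2 = 2 * m) ↔ (∃ m : ℤ, Odd m ∧ N4 = 2 * m) := by
  have f2 : Finset.filter (fun l => Nat.gcd l 16 = 2) (Finset.range 16) = {2, 6, 10, 14} := by
    decide
  have f4 : Finset.filter (fun l => Nat.gcd l 16 = 4) (Finset.range 16) = {4, 12} := by
    decide
  have z4 := zeta16_pow_four
  have hI : I ^ 2 = -1 := I_sq
  have z12 : zeta16 ^ 12 = -I := by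
    rw [show zeta16 ^ 12 = (zeta16 ^ 4) ^ 3 by ring, z4]; linear_combination I * hI
  have z10 : zeta16 ^ 10 = -zeta16 ^ 2 := by
    rw [show zeta16 ^ 10 = (zeta16 ^ 4) ^ 2 * zeta16 ^ 2 by ring, z4, hI]; ring
  have z14 : zeta16 ^ 14 = -zeta16 ^ 6 := by
    rw [show zeta16 ^ 14 = (zeta16 ^ 4) ^ 2 * zeta16 ^ 6 by ring, z4, hI]; ring
  obtain ⟨p, hp⟩ : ∃ p, p = a 0 + a 8 - a 4 - a 12 := ⟨_, rfl⟩
  obtain ⟨q, hq⟩ : ∃ p, p = a 1 + a 9 - a 5 - a 13 := ⟨_, rfl⟩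
  obtain ⟨r, hr⟩ : ∃ p, p = a 2 + a 10 - a 6 - a 14 := ⟨_, rfl⟩
  obtain ⟨s, hs⟩ : ∃ p, p = a 3 + a 11 - a 7 - a 15 := ⟨_, rfl⟩
  obtain ⟨u, hu⟩ : ∃ p, p = a 0 + a 4 + a 8 + a 12 - a 2 - a 6 - a 10 - a 14 := ⟨_, rfl⟩
  obtain ⟨v, hv⟩ : ∃ p, p = a 1 + a 5 + a 9 + a 13 - a 3 - a 7 - a 11 - a 15 := ⟨_, rfl⟩
  have P1 := fpoly_pair_s9 a (zeta16 ^ 2) I (by rw [← z4]; ring) hI p q r s hp hq hr hs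
  have P2 := fpoly_pair_s9 a (zeta16 ^ 6) (-I) (by rw [← z12]; ring) (by rw [neg_sq, hI])
    p q r s hp hq hr hs
  have E2 : N2 = (p ^ 2 - r ^ 2 + 2 * q * s) ^ 2 + (2 * p * r - q ^ 2 + s ^ 2) ^ 2 := by
    have : (N2 : ℂ) = (fpoly a (zeta16 ^ 2) * fpoly a (-zeta16 ^ 2)) *
        (fpoly a (zeta16 ^ 6) * fpoly a (-zeta16 ^ 6)) := by
      rw [h2, Nprod, f2]
      simp [z10, z14]
      ring
    rw [P1, P2] at this
    have h : (N2 : ℂ) = (((p ^ 2 - r ^ 2 + 2 * q * s) ^ 2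
        + (2 * p * r - q ^ 2 + s ^ 2) ^ 2 : ℤ) : ℂ) := by
      rw [this]
      push_cast
      linear_combination (-(2 * p * r - q ^ 2 + s ^ 2 : ℂ) ^ 2) * hI
    exact_mod_cast h
  have E4 : N4 = u ^ 2 + v ^ 2 := by
    have h : (N4 : ℂ) = ((u ^ 2 + v ^ 2 : ℤ) : ℂ) := by
      rw [h4, Nprod, f4, Finset.prod_pair (by norm_num), z4, z12,
        fpoly_of_sq a I hI, fpoly_of_sq a (-I) (by rw [neg_sq, hI]), ← hu, ← hv]
      push_cast
      linear_combination (-(v : ℂ) ^ 2) * hI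
    exact_mod_cast h
  rw [E2, E4, twice_odd_sq, twice_odd_sq]
  have o1 : Odd (p ^ 2 - r ^ 2 + 2 * q * s) ↔ Odd u := by
    have : Odd (p ^ 2 - r ^ 2 + 2 * q * s) ↔ Odd (p + r) := by
      simp [Int.odd_add, Int.odd_sub, parity_simps]
    rw [this, Int.odd_iff, Int.odd_iff]
    omega
  have o2 : Odd (2 * p * r - q ^ 2 + s ^ 2) ↔ Odd v := by
    have : Odd (2 * p * r - q ^ 2 + s ^ 2) ↔ Odd (q + s) := by
      rw [show 2 * p * r - q ^ 2 + s ^ 2 = s ^ 2 - q ^ 2 + 2 * p * r by ring, add_comm q s]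
      simp [Int.odd_add, Int.odd_sub, parity_simps]
    rw [this, Int.odd_iff, Int.odd_iff]
    omega
  rw [o1, o2]
end
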